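/- Let q ≥ 1 be a real number. Then lim_{N→∞} (1/(2^N · N^{q/2})) · Σ_{j=0}^{N} C(N, j)·|N − 2j|^q = 2^{q/2}·Γ((q+1)/2)/√π, where C(N,j) is the binomial coefficient and Γ is the Gamma function. -/

import Mathlib

/-!
Under the binomial distribution `Bin(N, 1/2)` of the number `k` of down spins, the normalized sum is
the absolute moment of order `q` of `(N - 2k) / √N`. Its complex moment generating function is
`z ↦ cosh (z / √N) ^ N`: on the imaginary axis this gives convergence in distribution to a standard
Gaussian, and on the real axis `cosh x ≤ exp (x² / 2)` gives a sub-Gaussian bound uniform in `N`.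
The latter bounds all absolute moments, so that the moment of order `q` passes to the limit.
-/

open MeasureTheory ProbabilityTheory Filter Topology
open scoped NNReal

section Clip

/-- Truncation of `x` at level `K`, meant for `0 ≤ K`. Unlike `ProbabilityTheory.truncation`, it is
continuous in `x`, and can therefore be integrated against weakly convergent laws. -/
def clip (K x : ℝ) : ℝ := max (-K) (min K x)

lemma continuous_clip (K : ℝ) : Continuous (clip K) := by
  unfold clip; fun_prop

lemma abs_clip_le (K x : ℝ) : |clip K x| ≤ |K| := by
  grind [clip]

lemma abs_clip_le_abs {K : ℝ} (hK : 0 ≤ K) (x : ℝ) : |clip K x| ≤ |x| := by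
  grind [clip]

lemma clip_of_abs_le {K x : ℝ} (h : |x| ≤ K) : clip K x = x := by
  rw [clip, min_eq_right (le_of_abs_le h), max_eq_right (neg_le_of_abs_le h)]

lemma abs_sub_clip_le_abs {K : ℝ} (hK : 0 ≤ K) (x : ℝ) : |x - clip K x| ≤ |x| := by
  grind [clip]

lemma abs_sub_clip_le_rpow_div {p K : ℝ} (hp : 1 ≤ p) (hK : 0 < K) (x : ℝ) :
    |x - clip K x| ≤ |x| ^ p / K ^ (p - 1) := by
  obtain hx | hx := le_total |x| K
  · rw [clip_of_abs_le hx, sub_self, abs_zero]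
    positivity
  · rw [le_div_iff₀ (by positivity)]
    calc |x - clip K x| * K ^ (p - 1) ≤ |x| * |x| ^ (p - 1) := by
          exact mul_le_mul (abs_sub_clip_le_abs hK.le x)
            (Real.rpow_le_rpow hK.le hx (by linarith)) (by positivity) (abs_nonneg x)
      _ = |x| ^ p := by
          rw [← Real.rpow_one_add' (abs_nonneg x) (by linarith), add_sub_cancel]

variable {Ω : Type*} {mΩ : MeasurableSpace Ω} {P : Measure Ω} {X : Ω → ℝ}

lemma integrable_clip [IsFiniteMeasure P] (hX : AEMeasurable X P) (K : ℝ) :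
    Integrable (fun ω ↦ clip K (X ω)) P :=
  .of_bound ((continuous_clip K).measurable.comp_aemeasurable hX).aestronglyMeasurable |K|
    (ae_of_all _ fun ω ↦ abs_clip_le K (X ω))

lemma tendsto_integral_clip (hX : Integrable X P) :
    Tendsto (fun K ↦ ∫ ω, clip K (X ω) ∂P) atTop (𝓝 (∫ ω, X ω ∂P)) := by
  refine tendsto_integral_filter_of_dominated_convergence (fun ω ↦ |X ω|) ?_ ?_ hX.abs ?_
  · exact .of_forall fun K ↦
      ((continuous_clip K).measurable.comp_aemeasurable hX.aemeasurable).aestronglyMeasurable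
  · filter_upwards [eventually_ge_atTop 0] with K hK
    exact ae_of_all _ fun ω ↦ abs_clip_le_abs hK (X ω)
  · refine ae_of_all _ fun ω ↦ tendsto_const_nhds.congr' ?_
    filter_upwards [eventually_ge_atTop |X ω|] with K hK
    exact (clip_of_abs_le hK).symm

lemma abs_integral_sub_integral_clip_le [IsFiniteMeasure P] {p K : ℝ} (hp : 1 ≤ p) (hK : 0 < K)
    (hX : AEMeasurable X P) (hXp : Integrable (fun ω ↦ |X ω| ^ p) P) :
    |∫ ω, X ω ∂P - ∫ ω, clip K (X ω) ∂P| ≤ (∫ ω, |X ω| ^ p ∂P) / K ^ (p - 1) := by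
  have hX1 : Integrable X P := by
    refine (integrable_norm_iff hX.aestronglyMeasurable).1 ?_
    simpa only [Real.rpow_one] using
      integrable_norm_rpow_of_le hX.aestronglyMeasurable zero_le_one (zero_le_one.trans hp) hp hXp
  rw [← integral_sub hX1 (integrable_clip hX K), ← integral_div]
  refine abs_integral_le_integral_abs.trans ?_
  exact integral_mono (hX1.sub (integrable_clip hX K)).abs (hXp.div_const _)
    fun ω ↦ abs_sub_clip_le_rpow_div hp hK (X ω)

end Clip

section MomentConvergence

variable {ι Ω' : Type*} {Ω : ι → Type*} {mΩ : ∀ i, MeasurableSpace (Ω i)}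
  {mΩ' : MeasurableSpace Ω'} {P : ∀ i, Measure (Ω i)} [∀ i, IsProbabilityMeasure (P i)]
  {P' : Measure Ω'} [IsProbabilityMeasure P'] {X : ∀ i, Ω i → ℝ} {Z : Ω' → ℝ} {l : Filter ι}

lemma tendsto_integral_clip_of_tendstoInDistribution (h : TendstoInDistribution X l Z P P')
    (K : ℝ) :
    Tendsto (fun i ↦ ∫ ω, clip K (X i ω) ∂P i) l (𝓝 (∫ ω, clip K (Z ω) ∂P')) := by
  have h_tendsto := ProbabilityMeasure.tendsto_iff_forall_integral_tendsto.1 h.tendsto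
    (.ofNormedAddCommGroup (clip K) (continuous_clip K) |K| (abs_clip_le K))
  have h_clip (μ : Measure ℝ) : AEStronglyMeasurable (clip K) μ :=
    (continuous_clip K).aestronglyMeasurable
  simpa only [ProbabilityMeasure.coe_mk, BoundedContinuousFunction.coe_ofNormedAddCommGroup,
    integral_map (h.forall_aemeasurable _) (h_clip _),
    integral_map h.aemeasurable_limit (h_clip _)] using h_tendsto

theorem tendsto_integral_of_tendstoInDistribution_of_integral_rpow_le {p C : ℝ} (hp : 1 < p)
    (h : TendstoInDistribution X l Z P P') (hX : ∀ i, Integrable (fun ω ↦ |X i ω| ^ p) (P i))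
    (hC : ∀ i, ∫ ω, |X i ω| ^ p ∂P i ≤ C) (hZ : Integrable Z P') :
    Tendsto (fun i ↦ ∫ ω, X i ω ∂P i) l (𝓝 (∫ ω, Z ω ∂P')) := by
  have h_unif : TendstoUniformly (fun K i ↦ ∫ ω, clip K (X i ω) ∂P i)
      (fun i ↦ ∫ ω, X i ω ∂P i) atTop := by
    have h_zero : Tendsto (fun K : ℝ ↦ C / K ^ (p - 1)) atTop (𝓝 0) :=
      (tendsto_rpow_atTop (sub_pos.2 hp)).const_div_atTop C
    rw [Metric.tendstoUniformly_iff]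
    intro ε hε
    filter_upwards [h_zero.eventually_lt_const hε, eventually_gt_atTop 0] with K hKε hK i
    calc |∫ ω, X i ω ∂P i - ∫ ω, clip K (X i ω) ∂P i|
        ≤ (∫ ω, |X i ω| ^ p ∂P i) / K ^ (p - 1) :=
          abs_integral_sub_integral_clip_le hp.le hK (h.forall_aemeasurable i) (hX i)
      _ ≤ C / K ^ (p - 1) := by gcongr; exact hC i
      _ < ε := hKε
  exact h_unif.tendsto_of_eventually_tendsto
    (.of_forall (tendsto_integral_clip_of_tendstoInDistribution h)) (tendsto_integral_clip hZ)

end MomentConvergence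

section SubGaussian

variable {Ω : Type*} {mΩ : MeasurableSpace Ω} {P : Measure Ω} {X : Ω → ℝ} {c : ℝ≥0} {p : ℝ}

lemma integrable_rpow_abs_of_hasSubgaussianMGF (h : HasSubgaussianMGF X c P) (hp : 0 ≤ p) :
    Integrable (fun ω ↦ |X ω| ^ p) P :=
  integrable_rpow_abs_of_integrable_exp_mul one_ne_zero (h.integrable_exp_mul 1)
    (h.integrable_exp_mul (-1)) hp

lemma integral_rpow_abs_le_of_hasSubgaussianMGF (h : HasSubgaussianMGF X c P) (hp : 0 ≤ p) :
    ∫ ω, |X ω| ^ p ∂P ≤ 2 * p ^ p * Real.exp (c / 2) := by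
  have h_le (x : ℝ) : |x| ^ p ≤ p ^ p * (Real.exp (1 * x) + Real.exp (-1 * x)) := by
    calc |x| ^ p ≤ p ^ p * Real.exp |x| := by
          simpa using rpow_abs_le_mul_exp_abs x hp one_ne_zero
      _ ≤ p ^ p * (Real.exp (1 * x) + Real.exp (-1 * x)) := by
          rw [one_mul, neg_one_mul]
          gcongr
          exact Real.exp_abs_le x
  have h_pos := h.integrable_exp_mul 1
  have h_neg := h.integrable_exp_mul (-1)
  calc ∫ ω, |X ω| ^ p ∂P
      ≤ ∫ ω, p ^ p * (Real.exp (1 * X ω) + Real.exp (-1 * X ω)) ∂P :=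
        integral_mono (integrable_rpow_abs_of_hasSubgaussianMGF h hp)
          ((h_pos.add h_neg).const_mul _) fun ω ↦ h_le (X ω)
    _ = p ^ p * (mgf X P 1 + mgf X P (-1)) := by
        rw [integral_const_mul, integral_add h_pos h_neg, mgf, mgf]
    _ ≤ p ^ p * (Real.exp (c * 1 ^ 2 / 2) + Real.exp (c * (-1) ^ 2 / 2)) := by
        gcongr
        exacts [h.mgf_le 1, h.mgf_le (-1)]
    _ = 2 * p ^ p * Real.exp (c / 2) := by
        rw [neg_one_sq, one_pow, mul_one]
        ring

end SubGaussian

theorem tendsto_integral_rpow_abs_of_hasSubgaussianMGF {ι Ω' : Type*} {Ω : ι → Type*}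
    {mΩ : ∀ i, MeasurableSpace (Ω i)} {mΩ' : MeasurableSpace Ω'} {P : ∀ i, Measure (Ω i)}
    [∀ i, IsProbabilityMeasure (P i)] {P' : Measure Ω'} [IsProbabilityMeasure P']
    {X : ∀ i, Ω i → ℝ} {Z : Ω' → ℝ} {l : Filter ι} {c : ℝ≥0} {q : ℝ} (hq : 0 ≤ q)
    (h : TendstoInDistribution X l Z P P') (hX : ∀ i, HasSubgaussianMGF (X i) c (P i))
    (hZ : Integrable (fun ω ↦ |Z ω| ^ q) P') :
    Tendsto (fun i ↦ ∫ ω, |X i ω| ^ q ∂P i) l (𝓝 (∫ ω, |Z ω| ^ q ∂P')) := by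
  have h_rpow : Continuous fun x : ℝ ↦ |x| ^ q :=
    continuous_abs.rpow_const fun _ ↦ .inr hq
  have h_sq (x : ℝ) : |(|x| ^ q)| ^ (2 : ℝ) = |x| ^ (q * 2) := by
    rw [abs_of_nonneg (by positivity), Real.rpow_mul (abs_nonneg x)]
  refine tendsto_integral_of_tendstoInDistribution_of_integral_rpow_le one_lt_two
    (h.continuous_comp h_rpow) (C := 2 * (q * 2) ^ (q * 2) * Real.exp (c / 2))
    (fun i ↦ ?_) (fun i ↦ ?_) hZ
  · simpa only [Function.comp_apply, h_sq] using
      integrable_rpow_abs_of_hasSubgaussianMGF (hX i) (by positivity)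
  · simpa only [Function.comp_apply, h_sq] using
      integral_rpow_abs_le_of_hasSubgaussianMGF (hX i) (by positivity)

section Gaussian

lemma integrable_rpow_abs_gaussianReal (μ : ℝ) (v : ℝ≥0) {q : ℝ} (hq : 0 ≤ q) :
    Integrable (fun x ↦ |x| ^ q) (gaussianReal μ v) :=
  integrable_rpow_abs_of_integrable_exp_mul (X := id) one_ne_zero
    (integrable_exp_mul_gaussianReal 1) (integrable_exp_mul_gaussianReal (-1)) hq

theorem integral_rpow_abs_gaussianReal {v : ℝ≥0} (hv : v ≠ 0) {q : ℝ} (hq : -1 < q) :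
    ∫ x, |x| ^ q ∂gaussianReal 0 v =
      (2 * v) ^ (q / 2) * Real.Gamma ((q + 1) / 2) / √Real.pi := by
  have h_even (x : ℝ) : gaussianPDFReal 0 v x • |x| ^ q =
      (√(2 * Real.pi * v))⁻¹ * (|x| ^ q * Real.exp (-(2 * v : ℝ)⁻¹ * |x| ^ (2 : ℝ))) := by
    have h_exponent : -x ^ 2 / (2 * v) = -(2 * v : ℝ)⁻¹ * x ^ 2 := by ring
    rw [gaussianPDFReal, smul_eq_mul, sub_zero, Real.rpow_two, sq_abs, h_exponent]
    ring
  have h_const : ((2 * v : ℝ)⁻¹) ^ (-(q + 1) / 2) = (2 * v) ^ (q / 2) * √(2 * v) := by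
    rw [Real.inv_rpow (by positivity), ← Real.rpow_neg (by positivity), Real.sqrt_eq_rpow,
      ← Real.rpow_add (by positivity)]
    ring_nf
  calc ∫ x, |x| ^ q ∂gaussianReal 0 v
      = (√(2 * Real.pi * v))⁻¹ * (2 * ∫ x in Set.Ioi (0 : ℝ),
          x ^ q * Real.exp (-(2 * v : ℝ)⁻¹ * x ^ (2 : ℝ))) := by
        simp_rw [integral_gaussianReal_eq_integral_smul hv, h_even]
        rw [integral_const_mul, integral_comp_abs
          (f := fun y ↦ y ^ q * Real.exp (-(2 * v : ℝ)⁻¹ * y ^ (2 : ℝ)))]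
    _ = (2 * v) ^ (q / 2) * Real.Gamma ((q + 1) / 2) / √Real.pi := by
        rw [integral_rpow_mul_exp_neg_mul_rpow two_pos hq (by positivity), h_const,
          mul_right_comm 2 Real.pi, Real.sqrt_mul (by positivity)]
        field_simp

end Gaussian

section Magnetization

/-- The fair success probability `1 / 2`, the parameter of the binomial distribution of the number
of down spins in the maximally mixed state. -/
noncomputable def oneHalf : unitInterval := ⟨1 / 2, by norm_num, by norm_num⟩

/-- Eigenvalue `N - 2k` of the total magnetization `M_z` on the configurations with `k` down spins
among `N`. As a random variable under `Bin(N, 1/2)`, its law is the spectral distribution of `M_z`,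
with multiplicities normalized by the Hilbert space dimension `2 ^ N`. -/
def magnetization (N k : ℕ) : ℝ := N - 2 * k

lemma integral_binomial_oneHalf {E : Type*} [NormedAddCommGroup E] [NormedSpace ℝ E]
    [CompleteSpace E] (N : ℕ) (f : ℕ → E) :
    ∫ k, f k ∂Bin(N, oneHalf) =
      ∑ k ∈ Finset.range (N + 1), ((N.choose k : ℝ) / 2 ^ N) • f k := by
  rw [integral_binomial, ← Nat.range_succ_eq_Iic]
  refine Finset.sum_congr rfl fun k hk ↦ ?_
  have hk : k ≤ N := Finset.mem_range_succ_iff.1 hk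
  have h_weight : (oneHalf : ℝ) ^ k * (1 - oneHalf) ^ (N - k) = 1 / 2 ^ N := by
    rw [oneHalf, sub_half, ← pow_add, Nat.add_sub_cancel' hk, one_div_pow]
  rw [mul_assoc, h_weight, mul_one_div]

lemma complexMGF_magnetization (N : ℕ) (z : ℂ) :
    complexMGF (magnetization N) Bin(N, oneHalf) z = Complex.cosh z ^ N := by
  rw [complexMGF, integral_binomial_oneHalf, Complex.cosh, div_pow, add_comm (Complex.exp z),
    add_pow, Finset.sum_div]
  refine Finset.sum_congr rfl fun k hk ↦ ?_
  have hk : k ≤ N := Finset.mem_range_succ_iff.1 hk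
  have h_exp : Complex.exp (z * magnetization N k) =
      Complex.exp (-z) ^ k * Complex.exp z ^ (N - k) := by
    rw [← Complex.exp_nat_mul, ← Complex.exp_nat_mul, ← Complex.exp_add, magnetization]
    push_cast [hk]
    ring_nf
  rw [h_exp, Complex.real_smul]
  push_cast
  ring

lemma charFun_map_magnetization (N : ℕ) (t : ℝ) :
    charFun (Bin(N, oneHalf).map (magnetization N)) t = Complex.cos t ^ N := by
  rw [← complexMGF_mul_I .of_discrete, complexMGF_magnetization, Complex.cosh_mul_I]

lemma mgf_magnetization (N : ℕ) (t : ℝ) :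
    mgf (magnetization N) Bin(N, oneHalf) t = Real.cosh t ^ N := by
  have h := complexMGF_magnetization N t
  rw [complexMGF_ofReal] at h
  exact_mod_cast h

lemma hasSubgaussianMGF_magnetization (N : ℕ) :
    HasSubgaussianMGF (magnetization N) N Bin(N, oneHalf) where
  integrable_exp_mul _ := integrable_binomial _
  mgf_le t := by
    rw [mgf_magnetization]
    calc Real.cosh t ^ N ≤ Real.exp (t ^ 2 / 2) ^ N :=
          pow_le_pow_left₀ (Real.cosh_pos t).le (Real.cosh_le_exp_half_sq t) N
      _ = Real.exp ((N : ℝ≥0) * t ^ 2 / 2) := by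
          rw [← Real.exp_nat_mul, mul_div_assoc, NNReal.coe_natCast]

lemma hasSubgaussianMGF_inv_sqrt_mul_magnetization (N : ℕ) :
    HasSubgaussianMGF (fun k ↦ (√N)⁻¹ * magnetization N k) 1 Bin(N, oneHalf) where
  integrable_exp_mul _ := integrable_binomial _
  mgf_le t := by
    have h_var : (N : ℝ) * (√N)⁻¹ ^ 2 ≤ 1 := by
      rw [inv_pow, Real.sq_sqrt N.cast_nonneg]
      exact mul_inv_le_one
    rw [mgf_const_mul]
    calc mgf (magnetization N) Bin(N, oneHalf) ((√N)⁻¹ * t)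
        ≤ Real.exp ((N : ℝ≥0) * ((√N)⁻¹ * t) ^ 2 / 2) :=
          (hasSubgaussianMGF_magnetization N).mgf_le _
      _ = Real.exp (N * (√N)⁻¹ ^ 2 * t ^ 2 / 2) := by
          rw [NNReal.coe_natCast, mul_pow, mul_assoc (N : ℝ)]
      _ ≤ Real.exp ((1 : ℝ≥0) * t ^ 2 / 2) := by
          rw [NNReal.coe_one]
          gcongr

theorem tendstoInDistribution_inv_sqrt_mul_magnetization :
    TendstoInDistribution (fun (N : ℕ) k ↦ (√N)⁻¹ * magnetization N k) atTop id
      (fun N ↦ Bin(N, oneHalf)) (gaussianReal 0 1) where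
  forall_aemeasurable _ := .of_discrete
  tendsto := by
    refine ProbabilityMeasure.tendsto_of_tendsto_charFun fun t ↦ ?_
    have h_mean : ∫ k, magnetization 1 k ∂Bin(1, oneHalf) = 0 := by
      rw [integral_binomial_oneHalf]
      norm_num [Finset.sum_range_succ, magnetization]
    have h_var : ∫ k, (magnetization 1 ^ 2) k ∂Bin(1, oneHalf) = 1 := by
      rw [integral_binomial_oneHalf]
      norm_num [Finset.sum_range_succ, magnetization]
    have h_clt := tendsto_charFun_inv_sqrt_mul_pow .of_discrete h_mean h_var t
    have h_charFun (N : ℕ) :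
        charFun (Bin(N, oneHalf).map fun k ↦ (√N)⁻¹ * magnetization N k) t =
          charFun (Bin(1, oneHalf).map (magnetization 1)) ((√N)⁻¹ * t) ^ N := by
      rw [charFun_map_mul_comp .of_discrete, charFun_map_magnetization,
        charFun_map_magnetization, pow_one]
    have h_gauss : charFun (gaussianReal 0 1) t = Complex.exp (-t ^ 2 / 2) := by
      simp [charFun_gaussianReal, neg_div]
    simpa only [ProbabilityMeasure.coe_mk, Measure.map_id, h_charFun, h_gauss] using h_clt

lemma integral_rpow_abs_inv_sqrt_mul_magnetization (N : ℕ) (q : ℝ) :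
    ∫ k, |(√N)⁻¹ * magnetization N k| ^ q ∂Bin(N, oneHalf) =
      1 / (2 ^ N * (N : ℝ) ^ (q / 2)) *
        ∑ k ∈ Finset.range (N + 1), (N.choose k : ℝ) * |(N : ℝ) - 2 * (k : ℝ)| ^ q := by
  have h_scale (x : ℝ) : |(√N)⁻¹ * x| ^ q = |x| ^ q / (N : ℝ) ^ (q / 2) := by
    rw [inv_mul_eq_div, abs_div, abs_of_nonneg (Real.sqrt_nonneg _),
      Real.div_rpow (abs_nonneg x) (Real.sqrt_nonneg _), Real.sqrt_eq_rpow,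
      ← Real.rpow_mul N.cast_nonneg, one_div_mul_eq_div]
  rw [integral_binomial_oneHalf, Finset.mul_sum]
  refine Finset.sum_congr rfl fun k _ ↦ ?_
  rw [h_scale, smul_eq_mul, magnetization]
  ring

end Magnetization

theorem stmt19_general (q : ℝ) (hq : 0 ≤ q) :
    Tendsto (fun N : ℕ ↦
        (1 / ((2 : ℝ) ^ N * (N : ℝ) ^ (q / 2))) *
          ∑ j ∈ Finset.range (N + 1), (N.choose j : ℝ) * |(N : ℝ) - 2 * (j : ℝ)| ^ q)
      atTop
      (𝓝 ((2 : ℝ) ^ (q / 2) * Real.Gamma ((q + 1) / 2) / √Real.pi)) := by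
  have h_moment := tendsto_integral_rpow_abs_of_hasSubgaussianMGF hq
    tendstoInDistribution_inv_sqrt_mul_magnetization
    hasSubgaussianMGF_inv_sqrt_mul_magnetization (integrable_rpow_abs_gaussianReal 0 1 hq)
  simp_rw [integral_rpow_abs_inv_sqrt_mul_magnetization, id_eq] at h_moment
  simpa only [integral_rpow_abs_gaussianReal one_ne_zero (neg_one_lt_zero.trans_le hq),
    NNReal.coe_one, mul_one] using h_moment

/-- Asymptotics of the Schatten `q`-norm of the total magnetization on `N` spin-1/2
sites: for `q ≥ 1`,
`lim_{N→∞} (1/(2^N N^{q/2})) Σ_{j=0}^{N} C(N,j)|N−2j|^q = 2^{q/2} Γ((q+1)/2)/√π`. -/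
theorem stmt19 (q : ℝ) (hq : 1 ≤ q) :
    Filter.Tendsto (fun N : ℕ =>
        (1 / ((2 : ℝ) ^ N * (N : ℝ) ^ (q / 2))) *
          ∑ j ∈ Finset.range (N + 1), (N.choose j : ℝ) * |(N : ℝ) - 2 * (j : ℝ)| ^ q)
      Filter.atTop
      (nhds ((2 : ℝ) ^ (q / 2) * Real.Gamma ((q + 1) / 2) / Real.sqrt Real.pi)) :=
  stmt19_general q (zero_le_one.trans hq)
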